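/- For every α > 0 and every E ∈ ℝ, the limit lim_{ε→0⁺} (i/(2π)) ∫_ℝ e^{-αt²} e^{-iEt} / (t + iε) dt exists and equals (1/(2√(πα))) ∫_{-∞}^0 e^{-(ω+E)²/(4α)} dω. -/

import Mathlib

open MeasureTheory Filter
open scoped Topology

/-!
For `ε > 0` the kernel is a Laplace transform, `i / (t + iε) = ∫_{ω ≤ 0} exp ((ε - it) ω) dω`.
Substituting this and exchanging the integrals (Fubini; the absolute value of the integrand is
`exp (εω) * exp (-αt²)`) leaves in `t` the Fourier transform of a Gaussian at frequency `ω + E`.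
Hence at each `ε > 0` the left-hand side is the claimed Gaussian half-line integral with the extra
factor `exp (εω) ≤ 1` in the integrand, and dominated convergence removes this factor as `ε → 0⁺`.
-/

lemma I_div_add_I_mul_eq_integral {ε : ℝ} (hε : 0 < ε) (t : ℝ) :
    Complex.I / ((t : ℂ) + Complex.I * ε)
      = ∫ ω in Set.Iic (0 : ℝ), Complex.exp (((ε : ℂ) - Complex.I * t) * ω) := by
  have hre : 0 < ((ε : ℂ) - Complex.I * t).re := by simpa using hε
  have h0 : (ε : ℂ) - Complex.I * t ≠ 0 := fun h => by simp [h] at hre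
  have h1 : (t : ℂ) + Complex.I * ε = Complex.I * ((ε : ℂ) - Complex.I * t) := by
    linear_combination (t : ℂ) * Complex.I_sq
  rw [integral_exp_mul_complex_Iic hre, h1]
  simp only [Complex.ofReal_zero, mul_zero, Complex.exp_zero]
  field_simp [Complex.I_ne_zero]

lemma integrable_gaussian_mul_laplace_kernel {α : ℝ} (hα : 0 < α) (E : ℝ) {ε : ℝ} (hε : 0 < ε) :
    Integrable (Function.uncurry fun t ω : ℝ =>
      (Real.exp (-α * t ^ 2) : ℂ) * Complex.exp (-Complex.I * E * t) *
        Complex.exp (((ε : ℂ) - Complex.I * t) * ω))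
      (volume.prod (volume.restrict (Set.Iic (0 : ℝ)))) := by
  have h1 : Integrable (fun t : ℝ => Real.exp (-α * t ^ 2)) := integrable_exp_neg_mul_sq hα
  have h2 : Integrable (fun ω : ℝ => Real.exp (ε * ω)) (volume.restrict (Set.Iic (0 : ℝ))) :=
    integrableOn_exp_mul_Iic hε 0
  refine (h1.mul_prod h2).mono' (Continuous.aestronglyMeasurable ?_) (ae_of_all _ ?_)
  · simp only [Function.uncurry_def]
    fun_prop
  · rintro ⟨t, ω⟩
    simp [Function.uncurry, Complex.norm_exp, -Complex.ofReal_pow]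

lemma integral_gaussian_mul_laplace_kernel {α : ℝ} (hα : 0 < α) (E ε ω : ℝ) :
    ∫ t : ℝ, (Real.exp (-α * t ^ 2) : ℂ) * Complex.exp (-Complex.I * E * t) *
        Complex.exp (((ε : ℂ) - Complex.I * t) * ω)
      = ((Real.sqrt (Real.pi / α) *
          (Real.exp (ε * ω) * Real.exp (-(ω + E) ^ 2 / (4 * α))) : ℝ) : ℂ) := by
  have key := fourierIntegral_gaussian (b := (α : ℂ)) (by simpa using hα) (-((ω : ℂ) + E))
  have hs : ((Real.pi : ℂ) / α) ^ (1 / 2 : ℂ) = (Real.sqrt (Real.pi / α) : ℂ) := by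
    rw [Real.sqrt_eq_rpow, Complex.ofReal_cpow (by positivity)]
    simp
  calc _ = ∫ t : ℝ, Complex.exp (ε * ω) *
        (Complex.exp (Complex.I * (-((ω : ℂ) + E)) * t) * Complex.exp (-(α : ℂ) * t ^ 2)) := by
        congr 1 with t
        push_cast
        simp only [← Complex.exp_add]
        ring_nf
    _ = _ := by
        rw [integral_const_mul, key, hs]
        push_cast
        rw [neg_sq]
        ring

/-- The left-hand side at a fixed `ε > 0`, obtained by Fubini. -/
lemma regularized_eq {α : ℝ} (hα : 0 < α) (E : ℝ) {ε : ℝ} (hε : 0 < ε) :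
    (Complex.I / (2 * Real.pi)) *
        ∫ t : ℝ, (Real.exp (-α * t ^ 2) : ℂ) * Complex.exp (-Complex.I * E * t) /
          ((t : ℂ) + Complex.I * ε)
      = (((1 / (2 * Real.sqrt (Real.pi * α))) *
        ∫ ω in Set.Iic (0 : ℝ), Real.exp (ε * ω) * Real.exp (-(ω + E) ^ 2 / (4 * α)) : ℝ) : ℂ) := by
  have hc : 1 / (2 * Real.pi) * Real.sqrt (Real.pi / α) = 1 / (2 * Real.sqrt (Real.pi * α)) := by
    have hpi := Real.pi_pos
    rw [Real.sqrt_div hpi.le, Real.sqrt_mul hpi.le]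
    have h1 : 0 < Real.sqrt Real.pi := Real.sqrt_pos.2 hpi
    have h2 : 0 < Real.sqrt α := Real.sqrt_pos.2 hα
    field_simp
    exact Real.sq_sqrt hpi.le
  calc _ = (1 / (2 * Real.pi) : ℂ) * ∫ t : ℝ, ∫ ω in Set.Iic (0 : ℝ),
          (Real.exp (-α * t ^ 2) : ℂ) * Complex.exp (-Complex.I * E * t) *
            Complex.exp (((ε : ℂ) - Complex.I * t) * ω) := by
        rw [← integral_const_mul, ← integral_const_mul]
        congr 1 with t
        rw [integral_const_mul, ← I_div_add_I_mul_eq_integral hε]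
        ring
    _ = (1 / (2 * Real.pi) : ℂ) * ∫ ω in Set.Iic (0 : ℝ), ((Real.sqrt (Real.pi / α) *
          (Real.exp (ε * ω) * Real.exp (-(ω + E) ^ 2 / (4 * α))) : ℝ) : ℂ) := by
        rw [integral_integral_swap (integrable_gaussian_mul_laplace_kernel hα E hε)]
        simp only [integral_gaussian_mul_laplace_kernel hα]
    _ = _ := by
        rw [integral_complex_ofReal, integral_const_mul, ← hc]
        push_cast
        ring

/-- The Hastings-Koma identity: the regularized Fourier transform of the Gaussian-damped
kernel `1/t` equals a Gaussian smoothing of the negative half-line indicator. -/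
theorem hastings_koma_identity (α : ℝ) (hα : 0 < α) (E : ℝ) :
    Tendsto (fun ε : ℝ =>
        (Complex.I / (2 * Real.pi)) *
          ∫ t : ℝ, (Real.exp (-α * t ^ 2) : ℂ) * Complex.exp (-Complex.I * E * t) /
            ((t : ℂ) + Complex.I * ε))
      (𝓝[>] 0)
      (𝓝 (((1 / (2 * Real.sqrt (Real.pi * α))) *
        ∫ ω in Set.Iic (0 : ℝ), Real.exp (-(ω + E) ^ 2 / (4 * α)) : ℝ) : ℂ)) := by
  have hint : Integrable (fun ω : ℝ => Real.exp (-(ω + E) ^ 2 / (4 * α))) := by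
    have h := (integrable_exp_neg_mul_sq (b := 1 / (4 * α)) (by positivity)).comp_add_right E
    refine h.congr (ae_of_all _ fun ω => ?_)
    simp only
    congr 1
    ring
  have hlim : Tendsto (fun ε : ℝ => ∫ ω in Set.Iic (0 : ℝ),
        Real.exp (ε * ω) * Real.exp (-(ω + E) ^ 2 / (4 * α))) (𝓝[>] 0)
      (𝓝 (∫ ω in Set.Iic (0 : ℝ), Real.exp (-(ω + E) ^ 2 / (4 * α)))) := by
    refine tendsto_integral_filter_of_dominated_convergence
      (fun ω => Real.exp (-(ω + E) ^ 2 / (4 * α))) ?_ ?_ hint.integrableOn ?_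
    · exact Eventually.of_forall fun ε => Continuous.aestronglyMeasurable (by fun_prop)
    · filter_upwards [self_mem_nhdsWithin] with ε hε
      filter_upwards [ae_restrict_mem measurableSet_Iic] with ω hω
      rw [Real.norm_of_nonneg (by positivity)]
      exact mul_le_of_le_one_left (Real.exp_pos _).le
        (Real.exp_le_one_iff.2 (mul_nonpos_of_nonneg_of_nonpos (le_of_lt hε) hω))
    · refine ae_of_all _ fun ω => ?_
      have h : Continuous fun ε : ℝ => Real.exp (ε * ω) * Real.exp (-(ω + E) ^ 2 / (4 * α)) := by
        fun_prop
      simpa using (h.tendsto 0).mono_left nhdsWithin_le_nhds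
  refine ((Complex.continuous_ofReal.tendsto _).comp
    (hlim.const_mul (1 / (2 * Real.sqrt (Real.pi * α))))).congr' ?_
  filter_upwards [self_mem_nhdsWithin] with ε hε
  exact (regularized_eq hα E hε).symm
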